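/- Let 1 ≤ r < n, let Q be an invertible n×n real matrix, let Ẽ be an n×n real symmetric matrix with I + Ẽ positive definite, and set A = Q·(I+Ẽ)·Qᵀ. Let V be a real n×r matrix with Vᵀ·V = I_r, let D be a real r×r diagonal matrix with Ẽ·V = V·D, and for α > 0 define P_α = Q·( α·(I − V·Vᵀ) + V·(I_r + D)·Vᵀ )·Qᵀ. Set α* = trace( (I+Ẽ)·(I − V·Vᵀ) ) / (n − r). Then D_LD(A, P_{α*}) = ln K(P_{α*}⁻¹·A) = −ln det(P_{α*}⁻¹·A) = −ln det(P_1⁻¹·A) + (n − r)·ln(α*). -/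

import Mathlib

open Matrix

/-- Bregman log determinant divergence. -/
noncomputable def DLD {n : ℕ} (A P : Matrix (Fin n) (Fin n) ℝ) : ℝ :=
  (A * P⁻¹).trace - Real.log (A * P⁻¹).det - n

/-- Kaporin's condition number. -/
noncomputable def Kap {n : ℕ} (M : Matrix (Fin n) (Fin n) ℝ) : ℝ :=
  (M.trace / n) ^ n / M.det

theorem aux_alg {n r : ℕ} 
    (V : Matrix (Fin n) (Fin r) ℝ) (hV : Vᵀ * V = 1)
    (W : Matrix (Fin r) (Fin r) ℝ) (hW : IsUnit W.det) (α : ℝ) (hα : α ≠ 0) :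
    (α • (1 - V * Vᵀ) + V * W * Vᵀ) * (α⁻¹ • (1 - V * Vᵀ) + V * W⁻¹ * Vᵀ) = 1 := by
  have hS : (1 - V * Vᵀ) * V = 0 := by
    rw [Matrix.sub_mul, Matrix.mul_assoc, hV]; simp
  have hS' : Vᵀ * (1 - V * Vᵀ) = 0 := by
    rw [Matrix.mul_sub, ← Matrix.mul_assoc, hV]; simp
  have hSS : (1 - V * Vᵀ) * (1 - V * Vᵀ) = 1 - V * Vᵀ := by
    rw [Matrix.mul_sub, ← Matrix.mul_assoc, hS]; simp
  have e1 : (1 - V * Vᵀ) * (V * W⁻¹ * Vᵀ) = 0 := by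
    rw [← Matrix.mul_assoc, ← Matrix.mul_assoc, hS]; simp
  have e2 : (V * W * Vᵀ) * (1 - V * Vᵀ) = 0 := by
    rw [Matrix.mul_assoc, hS']; simp
  have e3 : (V * W * Vᵀ) * (V * W⁻¹ * Vᵀ) = V * Vᵀ := by
    calc _ = V * W * (Vᵀ * V) * W⁻¹ * Vᵀ := by simp only [Matrix.mul_assoc]
      _ = V * (W * W⁻¹) * Vᵀ := by rw [hV]; simp only [Matrix.mul_assoc, Matrix.one_mul]
      _ = _ := by rw [Matrix.mul_nonsing_inv _ hW]; simp
  rw [Matrix.add_mul, Matrix.mul_add, Matrix.mul_add, e3, Matrix.smul_mul, Matrix.smul_mul,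
    Matrix.mul_smul, Matrix.mul_smul, e1, e2, hSS, smul_smul, mul_inv_cancel₀ hα]
  simp

theorem aux_det {n r : ℕ} (hrn : r < n)
    (V : Matrix (Fin n) (Fin r) ℝ) (hV : Vᵀ * V = 1)
    (W : Matrix (Fin r) (Fin r) ℝ) (α : ℝ) (hα : α ≠ 0) :
    (α • (1 - V * Vᵀ) + V * W * Vᵀ).det
      = ((1:ℝ) • (1 - V * Vᵀ) + V * W * Vᵀ).det * α ^ (n - r) := by
  have hS : (1 - V * Vᵀ) * V = 0 := by
    rw [Matrix.sub_mul, Matrix.mul_assoc, hV]; simp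
  have hS' : Vᵀ * (1 - V * Vᵀ) = 0 := by
    rw [Matrix.mul_sub, ← Matrix.mul_assoc, hV]; simp
  have hSS : (1 - V * Vᵀ) * (1 - V * Vᵀ) = 1 - V * Vᵀ := by
    rw [Matrix.mul_sub, ← Matrix.mul_assoc, hS]; simp
  have e1 : (1 - V * Vᵀ) * (V * Vᵀ) = 0 := by
    rw [← Matrix.mul_assoc, hS]; simp
  have e2 : (V * W * Vᵀ) * (1 - V * Vᵀ) = 0 := by
    rw [Matrix.mul_assoc, hS']; simp
  have e3 : (V * W * Vᵀ) * (V * Vᵀ) = V * W * Vᵀ := by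
    calc _ = V * W * (Vᵀ * V) * Vᵀ := by simp only [Matrix.mul_assoc]
      _ = _ := by rw [hV]; simp
  have h1 : (α • (1 - V * Vᵀ) + V * W * Vᵀ)
      = ((1:ℝ) • (1 - V * Vᵀ) + V * W * Vᵀ) * (α • (1 - V * Vᵀ) + V * Vᵀ) := by
    rw [one_smul, Matrix.add_mul, Matrix.mul_add, Matrix.mul_add, e3, Matrix.mul_smul,
      Matrix.mul_smul, e1, e2, hSS]
    simp
  have h2 : α • (1 - V * Vᵀ) + V * Vᵀ = α • (1 + (((1 - α) / α) • V) * Vᵀ) := by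
    rw [smul_add, Matrix.smul_mul, smul_smul, mul_div_cancel₀ _ hα, smul_sub, sub_smul, one_smul]
    abel
  rw [h1, det_mul]
  congr 1
  rw [h2, det_smul, det_one_add_mul_comm, Matrix.mul_smul, hV]
  have h3 : (1 : Matrix (Fin r) (Fin r) ℝ) + ((1 - α) / α) • 1 = (α⁻¹) • 1 := by
    have : α⁻¹ = 1 + (1 - α) / α := by field_simp; ring
    rw [this, add_smul, one_smul]
  rw [h3, det_smul, det_one, Fintype.card_fin, Fintype.card_fin, mul_one, inv_pow,
    pow_sub₀ _ hα hrn.le]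

theorem aux_trace {n r : ℕ} (V : Matrix (Fin n) (Fin r) ℝ) (hV : Vᵀ * V = 1) :
    (V * Vᵀ).trace = r := by
  rw [trace_mul_comm, hV]; simp

theorem aux_pos {n r : ℕ} (hrn : r < n) (B : Matrix (Fin n) (Fin n) ℝ) (hB : B.PosDef)
    (V : Matrix (Fin n) (Fin r) ℝ) (hV : Vᵀ * V = 1) :
    0 < (B * (1 - V * Vᵀ)).trace := by
  have hS : (1 - V * Vᵀ) * V = 0 := by
    rw [Matrix.sub_mul, Matrix.mul_assoc, hV]; simp
  have hSS : (1 - V * Vᵀ) * (1 - V * Vᵀ) = 1 - V * Vᵀ := by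
    rw [Matrix.mul_sub, ← Matrix.mul_assoc, hS]; simp
  have hST : (1 - V * Vᵀ)ᴴ = 1 - V * Vᵀ := by
    simp [conjTranspose_eq_transpose_of_trivial]
  have htr : (1 - V * Vᵀ).trace = (n:ℝ) - r := by
    rw [trace_sub, aux_trace V hV]; simp
  generalize 1 - V * Vᵀ = S at *
  have h1 : (B * S).trace = (Sᴴ * B * S).trace := by
    rw [hST, trace_mul_comm (S * B), ← Matrix.mul_assoc, hSS, trace_mul_comm]
  have hp : (Sᴴ * B * S).PosSemidef := hB.posSemidef.conjTranspose_mul_mul_same S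
  rw [h1]
  refine lt_of_le_of_ne hp.trace_nonneg fun h0 => ?_
  have hz := hp.trace_eq_zero_iff.mp h0.symm
  have hS0 : S = 0 := by
    apply Matrix.ext_of_mulVec_single
    intro i
    by_contra hne
    rw [Matrix.zero_mulVec] at hne
    have := hB.dotProduct_mulVec_pos hne
    rw [star_mulVec, ← dotProduct_mulVec, mulVec_mulVec, mulVec_mulVec, hz] at this
    simp at this
  rw [hS0] at htr
  have : (r:ℝ) < n := by exact_mod_cast hrn
  simp at htr
  linarith

/-- at the optimal scaling `α*`,
`D_LD(A, P_{α*}) = ln K(P_{α*}⁻¹·A) = −ln det(P_{α*}⁻¹·A)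
 = −ln det(P_1⁻¹·A) + (n−r)·ln α*`. -/
theorem stmt_10 (n r : ℕ) (hr : 1 ≤ r) (hrn : r < n)
    (Q E : Matrix (Fin n) (Fin n) ℝ) (hQ : IsUnit Q.det)
    (hEsymm : E.IsSymm) (hEpd : (1 + E).PosDef)
    (A : Matrix (Fin n) (Fin n) ℝ) (hA : A = Q * (1 + E) * Qᵀ)
    (V : Matrix (Fin n) (Fin r) ℝ) (hV : Vᵀ * V = 1)
    (d : Fin r → ℝ) (hVD : E * V = V * diagonal d)
    (P : ℝ → Matrix (Fin n) (Fin n) ℝ)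
    (hP : ∀ α : ℝ, P α = Q * (α • (1 - V * Vᵀ) + V * (1 + diagonal d) * Vᵀ) * Qᵀ)
    (αstar : ℝ) (hαstar : αstar = ((1 + E) * (1 - V * Vᵀ)).trace / ((n : ℝ) - r)) :
    DLD A (P αstar) = Real.log (Kap ((P αstar)⁻¹ * A)) ∧
    DLD A (P αstar) = - Real.log ((P αstar)⁻¹ * A).det ∧
    DLD A (P αstar) = - Real.log ((P 1)⁻¹ * A).det + ((n : ℝ) - r) * Real.log αstar := by
  have hrn' : (r:ℝ) < n := by exact_mod_cast hrn
  have hpos : 0 < αstar := by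
    rw [hαstar]; exact div_pos (aux_pos hrn _ hEpd V hV) (by linarith)
  have hα := hpos.ne'
  have hBV : (1 + E) * V = V * (1 + diagonal d) := by
    rw [Matrix.add_mul, Matrix.mul_add, hVD]; simp
  have hWpd : (1 + diagonal d).PosDef := by
    have h : Vᴴ * (1 + E) * V = 1 + diagonal d := by
      rw [Matrix.mul_assoc, hBV, ← Matrix.mul_assoc, conjTranspose_eq_transpose_of_trivial, hV,
        Matrix.one_mul]
    rw [← h]
    refine hEpd.conjTranspose_mul_mul_same ?_
    intro x y hxy
    have := congrArg (fun z => Vᵀ *ᵥ z) hxy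
    simpa [mulVec_mulVec, hV] using this
  have hWd : IsUnit (1 + diagonal d).det := hWpd.det_pos.ne'.isUnit
  generalize 1 + diagonal d = W at *
  generalize 1 + E = B at *
  have hQT : IsUnit Qᵀ.det := by rwa [det_transpose]
  have hAdet : A.det ≠ 0 := by
    rw [hA, det_mul, det_mul]
    exact mul_ne_zero (mul_ne_zero hQ.ne_zero hEpd.det_pos.ne') hQT.ne_zero
  have hPdet : ∀ α : ℝ, α ≠ 0 → (P α).det ≠ 0 := by
    intro α h
    rw [hP, det_mul, det_mul]
    refine mul_ne_zero (mul_ne_zero hQ.ne_zero ?_) hQT.ne_zero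
    intro h0
    have := congrArg det (aux_alg V hV W hWd α h)
    rw [det_mul, h0] at this
    simp at this
  have hPrel : (P αstar).det = (P 1).det * αstar ^ (n - r) := by
    rw [hP, hP, det_mul, det_mul, det_mul, det_mul, aux_det hrn V hV W αstar hα]
    ring
  have hN : (P αstar)⁻¹ = Qᵀ⁻¹ * (αstar⁻¹ • (1 - V * Vᵀ) + V * W⁻¹ * Vᵀ) * Q⁻¹ := by
    rw [hP, Matrix.mul_inv_rev, Matrix.mul_inv_rev, inv_eq_right_inv (aux_alg V hV W hWd αstar hα),
      ← Matrix.mul_assoc]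
  have htr : (A * (P αstar)⁻¹).trace = n := by
    have h1 : A * (P αstar)⁻¹
        = Q * (B * (αstar⁻¹ • (1 - V * Vᵀ) + V * W⁻¹ * Vᵀ)) * Q⁻¹ := by
      rw [hN, hA]
      calc _ = Q * B * (Qᵀ * Qᵀ⁻¹) * (αstar⁻¹ • (1 - V * Vᵀ) + V * W⁻¹ * Vᵀ) * Q⁻¹ := by
            simp only [Matrix.mul_assoc]
        _ = _ := by
            rw [Matrix.mul_nonsing_inv _ hQT, Matrix.mul_one]
            simp only [Matrix.mul_assoc]
    have h2 : B * (V * W⁻¹ * Vᵀ) = V * Vᵀ := by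
      rw [← Matrix.mul_assoc, ← Matrix.mul_assoc, hBV, Matrix.mul_assoc V,
        Matrix.mul_nonsing_inv _ hWd, Matrix.mul_one]
    rw [h1, trace_mul_comm, ← Matrix.mul_assoc, Matrix.nonsing_inv_mul _ hQ, Matrix.one_mul,
      Matrix.mul_add, h2, Matrix.mul_smul, trace_add, trace_smul, aux_trace V hV]
    have h3 : (B * (1 - V * Vᵀ)).trace = αstar * ((n:ℝ) - r) := by
      rw [hαstar, div_mul_cancel₀]
      linarith
    rw [h3, smul_eq_mul, inv_mul_cancel_left₀ hα]
    ring
  have hD : DLD A (P αstar) = - Real.log ((P αstar)⁻¹ * A).det := by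
    unfold DLD
    rw [htr, det_mul_comm]
    ring
  refine ⟨?_, hD, ?_⟩
  · have hn : (n:ℝ) ≠ 0 := by
      have : 0 < n := by omega
      positivity
    rw [hD, Kap, trace_mul_comm, htr, div_self hn, one_pow, one_div, Real.log_inv]
  · have hd : ∀ α : ℝ, ((P α)⁻¹ * A).det = A.det / (P α).det := by
      intro α
      rw [det_mul, det_nonsing_inv, Ring.inverse_eq_inv', mul_comm, div_eq_mul_inv]
    rw [hD, hd, hd, hPrel, Real.log_div hAdet (mul_ne_zero (hPdet 1 one_ne_zero) (pow_ne_zero _ hα)),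
      Real.log_div hAdet (hPdet 1 one_ne_zero), Real.log_mul (hPdet 1 one_ne_zero)
      (pow_ne_zero _ hα), Real.log_pow, Nat.cast_sub hrn.le]
    ring
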